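/- arXiv:2502.20215 — 7 statements merged into one kernel-verified Lean document; each statement's English description precedes it below -/
import Mathlib

section
/- Let E be the Euclidean plane (EuclideanSpace ℝ (Fin 2)). Let a, b, p, q ∈ E with a ≠ p, a ≠ q, b ≠ p, b ≠ q, and suppose some point x lies in the open segment between a and b and also in the open segment between p and q. Then at least one of the following holds: p ∈ lens(a,b), or q ∈ lens(a,b), or a ∈ lens(p,q), or b ∈ lens(p,q). Equivalently, two edges whose lenses each contain none of the other edge's endpoints cannot cross. -/
abbrev PlaneE := EuclideanSpace ℝ (Fin 2)

theorem lens_of_obtuse (a b p : PlaneE) (hap : a ≠ p) (hbp : b ≠ p)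
    (h : inner ℝ (a - p) (b - p) ≤ 0) :
    dist p a < dist a b ∧ dist p b < dist a b := by
  have h1 : 0 < ‖a - p‖ := norm_pos_iff.2 (sub_ne_zero.2 hap)
  have h2 : 0 < ‖b - p‖ := norm_pos_iff.2 (sub_ne_zero.2 hbp)
  have h3 := norm_sub_sq_real (a - p) (b - p)
  rw [sub_sub_sub_cancel_right] at h3
  rw [dist_comm p a, dist_comm p b, dist_eq_norm, dist_eq_norm, dist_eq_norm]
  constructor
  · exact lt_of_pow_lt_pow_left₀ 2 (norm_nonneg _) (by nlinarith)
  · exact lt_of_pow_lt_pow_left₀ 2 (norm_nonneg _) (by nlinarith)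

theorem inner_weighted (a b p q x : PlaneE) (hx : x ∈ openSegment ℝ p q)
    (hp : 0 < inner ℝ (a - p) (b - p)) (hq : 0 < inner ℝ (a - q) (b - q)) :
    inner ℝ (p - x) (q - x) < inner ℝ (a - x) (b - x) := by
  obtain ⟨c, d, hc, hd, hcd, rfl⟩ := hx
  have key : c * inner ℝ (a - p) (b - p) + d * inner ℝ (a - q) (b - q)
      = inner ℝ (a - (c • p + d • q)) (b - (c • p + d • q))
        - inner ℝ (p - (c • p + d • q)) (q - (c • p + d • q)) := by
    obtain rfl : d = 1 - c := by linarith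
    simp only [PiLp.inner_apply, Fin.sum_univ_two, PiLp.sub_apply, PiLp.add_apply,
      PiLp.smul_apply, smul_eq_mul, RCLike.inner_apply, conj_trivial]
    ring
  have := mul_pos hc hp
  have := mul_pos hd hq
  linarith

/-- Two crossing edges in the plane cannot both have lenses avoiding the
other edge's endpoints: if `x` lies on the open segments `ab` and `pq`,
then `p ∈ lens(a,b)`, or `q ∈ lens(a,b)`, or `a ∈ lens(p,q)`, or
`b ∈ lens(p,q)`. -/
theorem crossing_edges_lens
    (a b p q : EuclideanSpace ℝ (Fin 2))
    (hap : a ≠ p) (haq : a ≠ q) (hbp : b ≠ p) (hbq : b ≠ q)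
    (x : EuclideanSpace ℝ (Fin 2))
    (hx_ab : x ∈ openSegment ℝ a b)
    (hx_pq : x ∈ openSegment ℝ p q) :
    (dist p a < dist a b ∧ dist p b < dist a b) ∨
    (dist q a < dist a b ∧ dist q b < dist a b) ∨
    (dist a p < dist p q ∧ dist a q < dist p q) ∨
    (dist b p < dist p q ∧ dist b q < dist p q) := by
  by_contra hcon
  simp only [not_or] at hcon
  obtain ⟨h1, h2, h3, h4⟩ := hcon
  have k1 := not_le.1 (fun h => h1 (lens_of_obtuse a b p hap hbp h))
  have k2 := not_le.1 (fun h => h2 (lens_of_obtuse a b q haq hbq h))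
  have k3 := not_le.1 (fun h => h3 (lens_of_obtuse p q a hap.symm haq.symm h))
  have k4 := not_le.1 (fun h => h4 (lens_of_obtuse p q b hbp.symm hbq.symm h))
  exact lt_asymm (inner_weighted a b p q x hx_pq k1 k2) (inner_weighted p q a b x hx_ab k3 k4)
end

section
/- Let E be the Euclidean plane (EuclideanSpace ℝ (Fin 2)) and let a, b ∈ E with a ≠ b; write d = dist a b. Let u, v ∈ E satisfy dist u a < d, dist u b < d, dist v a < d, dist v b < d (i.e., u, v ∈ lens(a,b)), and suppose u and v lie weakly on the same side of the affine line through a and b (AffineSubspace.WSameSide of the affine span of {a,b}). Then dist u v < d. -/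
theorem half_lens_aux (D s t s' t' : ℝ) (h1 : s^2+t^2 < D^2) (h2 : (s-D)^2+t^2 < D^2)
    (h3 : s'^2+t'^2 < D^2) (h4 : (s'-D)^2+t'^2 < D^2) (hD : 0 < D) (ht : 0 ≤ t*t') :
    (s-s')^2+(t-t')^2 < D^2 := by
  have a1 : 0 < s := by nlinarith [sq_nonneg t, sq_nonneg s]
  have a2 : s < D := by nlinarith [sq_nonneg t]
  have a3 : 0 < s' := by nlinarith [sq_nonneg t', sq_nonneg s']
  have a4 : s' < D := by nlinarith [sq_nonneg t']
  have key : (t-t')^2 ≤ t^2 ∨ (t-t')^2 ≤ t'^2 := by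
    by_contra! hc
    nlinarith [mul_nonneg ht ht, hc.1, hc.2, sq_nonneg (t-t'), sq_nonneg t, sq_nonneg t',
      mul_pos (sub_pos.2 hc.1) (sub_pos.2 hc.2)]
  rcases key with k | k <;> rcases le_total s s' with l | l <;> nlinarith

/-- Same half-lens lemma: two points of the open lens of `(a,b)` lying
weakly on the same side of the line through `a` and `b` are at distance
less than `dist a b`. -/
theorem same_half_lens
    (a b u v : EuclideanSpace ℝ (Fin 2)) (hab : a ≠ b)
    (hua : dist u a < dist a b) (hub : dist u b < dist a b)
    (hva : dist v a < dist a b) (hvb : dist v b < dist a b)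
    (hside : AffineSubspace.WSameSide
      (affineSpan ℝ ({a, b} : Set (EuclideanSpace ℝ (Fin 2)))) u v) :
    dist u v < dist a b := by
  have hpos : 0 < dist a b := dist_pos.2 hab
  have hd : ∀ x y : EuclideanSpace ℝ (Fin 2), dist x y ^ 2 = (x 0 - y 0)^2 + (x 1 - y 1)^2 := by
    intro x y
    rw [EuclideanSpace.dist_sq_eq]
    simp [Fin.sum_univ_two, Real.dist_eq, sq_abs]
  have hsq : ∀ x y : EuclideanSpace ℝ (Fin 2), dist x y < dist a b →
      (x 0 - y 0)^2 + (x 1 - y 1)^2 < (a 0 - b 0)^2 + (a 1 - b 1)^2 := by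
    intro x y h
    rw [← hd, ← hd]
    exact pow_lt_pow_left₀ h dist_nonneg (by norm_num)
  have hDpos : 0 < (a 0 - b 0)^2 + (a 1 - b 1)^2 := by
    rw [← hd]; positivity
  have e1 := mul_lt_mul_of_pos_left (hsq _ _ hua) hDpos
  have e2 := mul_lt_mul_of_pos_left (hsq _ _ hub) hDpos
  have e3 := mul_lt_mul_of_pos_left (hsq _ _ hva) hDpos
  have e4 := mul_lt_mul_of_pos_left (hsq _ _ hvb) hDpos
  have ht : 0 ≤ ((b 0 - a 0) * (u 1 - a 1) - (b 1 - a 1) * (u 0 - a 0)) *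
      ((b 0 - a 0) * (v 1 - a 1) - (b 1 - a 1) * (v 0 - a 0)) := by
    obtain ⟨p, hp, q, hq, hr⟩ := hside
    have hl : ∀ p ∈ affineSpan ℝ ({a, b} : Set (EuclideanSpace ℝ (Fin 2))), ∀ u : EuclideanSpace ℝ (Fin 2),
        (b 0 - a 0) * (u 1 - a 1) - (b 1 - a 1) * (u 0 - a 0) =
        (b 0 - a 0) * (u -ᵥ p) 1 - (b 1 - a 1) * (u -ᵥ p) 0 := by
      intro p hp u
      obtain ⟨r, rfl⟩ := (mem_affineSpan_pair_iff_exists_lineMap_eq).1 hp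
      simp [AffineMap.lineMap_apply]
      ring
    rw [hl p hp u, hl q hq v]
    rcases hr with h | h | ⟨r₁, r₂, h₁, h₂, h⟩
    · rw [h]; simp
    · rw [h]; simp
    · have h0 := congrArg (fun x : EuclideanSpace ℝ (Fin 2) => x 0) h
      have h1 := congrArg (fun x : EuclideanSpace ℝ (Fin 2) => x 1) h
      simp only [PiLp.smul_apply, smul_eq_mul] at h0 h1
      generalize (u -ᵥ p) 0 = x0 at *
      generalize (u -ᵥ p) 1 = x1 at *
      generalize (v -ᵥ q) 0 = y0 at *
      generalize (v -ᵥ q) 1 = y1 at *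
      have hx : r₁ * ((b 0 - a 0) * x1 - (b 1 - a 1) * x0)
          = r₂ * ((b 0 - a 0) * y1 - (b 1 - a 1) * y0) := by
        linear_combination (b 0 - a 0) * h1 - (b 1 - a 1) * h0
      generalize (b 0 - a 0) * x1 - (b 1 - a 1) * x0 = X at *
      generalize (b 0 - a 0) * y1 - (b 1 - a 1) * y0 = Y at *
      have : 0 ≤ r₁ * (X * Y) := by
        have : r₁ * (X * Y) = r₂ * Y^2 := by linear_combination Y * hx
        rw [this]; positivity
      exact nonneg_of_mul_nonneg_right this h₁
  have main := half_lens_aux ((a 0 - b 0)^2 + (a 1 - b 1)^2)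
    ((b 0 - a 0) * (u 0 - a 0) + (b 1 - a 1) * (u 1 - a 1))
    ((b 0 - a 0) * (u 1 - a 1) - (b 1 - a 1) * (u 0 - a 0))
    ((b 0 - a 0) * (v 0 - a 0) + (b 1 - a 1) * (v 1 - a 1))
    ((b 0 - a 0) * (v 1 - a 1) - (b 1 - a 1) * (v 0 - a 0))
    (by linarith) (by linarith) (by linarith) (by linarith) hDpos ht
  apply lt_of_pow_lt_pow_left₀ 2 hpos.le
  rw [hd, hd]
  refine lt_of_mul_lt_mul_left ?_ hDpos.le
  linarith
end

section
/- Let E be the Euclidean plane (EuclideanSpace ℝ (Fin 2)). Let A, B, C, c ∈ E and r ≥ 0 be such that c lies in the convex hull of {A, B, C} and dist c A ≥ r, dist c B ≥ r, dist c C ≥ r. Then the longest side of the triangle is at least √3·r, i.e. max (dist A B) (max (dist A C) (dist B C)) ≥ √3 · r. -/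
theorem aux_weight (x y z w : EuclideanSpace ℝ (Fin 2)) (a b g r M : ℝ)
    (ha : 1 / 3 ≤ a) (hb : 0 ≤ b) (hg : 0 ≤ g) (hs : a + b + g = 1)
    (hw : w = a • x + b • y + g • z) (hM : 0 ≤ M)
    (h1 : r ^ 2 ≤ dist w x ^ 2) (h2 : r ^ 2 ≤ dist w y ^ 2) (h3 : r ^ 2 ≤ dist w z ^ 2)
    (hxy : dist x y ^ 2 ≤ M) (hxz : dist x z ^ 2 ≤ M) : 3 * r ^ 2 ≤ M := by
  have key : b * dist x y ^ 2 + g * dist x z ^ 2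
      = dist w x ^ 2 + (a * dist w x ^ 2 + b * dist w y ^ 2 + g * dist w z ^ 2) := by
    have ha' : a = 1 - b - g := by linarith
    subst hw
    simp only [EuclideanSpace.dist_sq_eq, Fin.sum_univ_two, Real.dist_eq, sq_abs,
      PiLp.add_apply, PiLp.smul_apply, smul_eq_mul]
    subst ha'
    ring
  have e1 := mul_le_mul_of_nonneg_left hxy hb
  have e2 := mul_le_mul_of_nonneg_left hxz hg
  have e3 := mul_le_mul_of_nonneg_left h1 (by linarith : 0 ≤ a)
  have e4 := mul_le_mul_of_nonneg_left h2 hb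
  have e5 := mul_le_mul_of_nonneg_left h3 hg
  have e6 : a * r ^ 2 + b * r ^ 2 + g * r ^ 2 = r ^ 2 := by
    rw [← add_mul, ← add_mul, hs, one_mul]
  have e7 : b * M + g * M = (1 - a) * M := by rw [← hs]; ring
  have e8 : (1 - a) * M ≤ 2 / 3 * M := mul_le_mul_of_nonneg_right (by linarith) hM
  linarith

/-- A triangle containing the center of a disk of radius `r` with no vertex
strictly inside the disk has longest side at least `√3 · r`. -/
theorem triangle_containing_center_longest_side
    (A B C c : EuclideanSpace ℝ (Fin 2)) (r : ℝ) (hr : 0 ≤ r)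
    (hc : c ∈ convexHull ℝ ({A, B, C} : Set (EuclideanSpace ℝ (Fin 2))))
    (hA : dist c A ≥ r) (hB : dist c B ≥ r) (hC : dist c C ≥ r) :
    max (dist A B) (max (dist A C) (dist B C)) ≥ Real.sqrt 3 * r := by
  obtain ⟨a, b, g, ha, hb, hg, hs, hw⟩ : ∃ a b g : ℝ, 0 ≤ a ∧ 0 ≤ b ∧ 0 ≤ g ∧ a + b + g = 1 ∧
      c = a • A + b • B + g • C := by
    rw [convexHull_insert (by simp), convexHull_pair] at hc
    simp only [mem_convexJoin, Set.mem_singleton_iff, exists_eq_left] at hc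
    obtain ⟨q, ⟨u, v, hu, hv, huv, rfl⟩, ⟨s, t, hs, ht, hst, rfl⟩⟩ := hc
    refine ⟨s, t * u, t * v, hs, mul_nonneg ht hu, mul_nonneg ht hv, ?_, ?_⟩
    · rw [add_assoc, ← mul_add, huv, mul_one, hst]
    · rw [smul_add, smul_smul, smul_smul, add_assoc]
  set m := max (dist A B) (max (dist A C) (dist B C)) with hm
  have m1 : dist A B ≤ m := le_max_left _ _
  have m2 : dist A C ≤ m := (le_max_left _ _).trans (le_max_right _ _)
  have m3 : dist B C ≤ m := (le_max_right _ _).trans (le_max_right _ _)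
  have m0 : 0 ≤ m := dist_nonneg.trans m1
  have s1 := pow_le_pow_left₀ dist_nonneg m1 2
  have s2 := pow_le_pow_left₀ dist_nonneg m2 2
  have s3 := pow_le_pow_left₀ dist_nonneg m3 2
  have t1 := pow_le_pow_left₀ hr hA 2
  have t2 := pow_le_pow_left₀ hr hB 2
  have t3 := pow_le_pow_left₀ hr hC 2
  have main : 3 * r ^ 2 ≤ m ^ 2 := by
    by_cases h1 : 1 / 3 ≤ a
    · exact aux_weight A B C c a b g r _ h1 hb hg hs hw (sq_nonneg m) t1 t2 t3 s1 s2
    by_cases h2 : 1 / 3 ≤ b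
    · exact aux_weight B A C c b a g r _ h2 ha hg (by linarith) (by rw [hw]; abel)
        (sq_nonneg m) t2 t1 t3 (by rwa [dist_comm]) s3
    · exact aux_weight C A B c g a b r _ (by push Not at h1 h2; linarith) ha hb (by linarith)
        (by rw [hw]; abel) (sq_nonneg m) t3 t1 t2 (by rwa [dist_comm]) (by rwa [dist_comm])
  refine (pow_le_pow_iff_left₀ (by positivity) m0 two_ne_zero).1 ?_
  rw [mul_pow, Real.sq_sqrt (by norm_num)]
  exact main
end

section
/- Let E be the Euclidean plane (EuclideanSpace ℝ (Fin 2)). Let a, b, p, q ∈ E and suppose: (i) some point x lies in the open segment between a and b and also in the open segment between p and q; (ii) a, p, q are not collinear and b, p, q are not collinear; (iii) a ∉ lens(p,q) and b ∉ lens(p,q); (iv) p ∉ lens(a,b); (v) q ∈ lens(a,b), i.e. dist q a < dist a b and dist q b < dist a b. Then dist a p ≥ dist p q and dist b p ≥ dist p q. -/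
theorem far_aux
    (a b p q x : EuclideanSpace ℝ (Fin 2))
    (hx_ab : x ∈ openSegment ℝ a b)
    (hx_pq : x ∈ openSegment ℝ p q)
    (hcol_a : ¬ Collinear ℝ ({a, p, q} : Set (EuclideanSpace ℝ (Fin 2))))
    (ha_lens : ¬ (dist a p < dist p q ∧ dist a q < dist p q))
    (hp_lens : ¬ (dist p a < dist a b ∧ dist p b < dist a b))
    (hq : dist q a < dist a b) :
    dist a p ≥ dist p q := by
  by_contra hlt
  rw [ge_iff_le, not_le] at hlt
  have h1 : dist p q ≤ dist a q := by
    by_contra h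
    exact ha_lens ⟨hlt, not_le.1 h⟩
  have h2 : dist a b ≤ dist p b := by
    by_contra h
    refine hp_lens ⟨?_, not_le.1 h⟩
    rw [dist_comm q a] at hq
    rw [dist_comm p a]
    linarith
  have w1 : Wbtw ℝ a x b := mem_segment_iff_wbtw.1 (openSegment_subset_segment ℝ a b hx_ab)
  have w2 : Wbtw ℝ p x q := mem_segment_iff_wbtw.1 (openSegment_subset_segment ℝ p q hx_pq)
  have e1 := w1.dist_add_dist
  have e2 := w2.dist_add_dist
  have t1 := dist_triangle a x q
  have t2 := dist_triangle p x b
  have w3 : Wbtw ℝ a x q := dist_add_dist_eq_iff.1 (by linarith)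
  have hpq : p ≠ q := by
    rintro rfl
    rw [dist_self] at hlt
    exact absurd hlt (not_lt.2 dist_nonneg)
  have hxq : x ≠ q := by
    rintro rfl
    exact hpq (right_mem_openSegment_iff.1 hx_pq)
  apply hcol_a
  have ha : a ∈ line[ℝ, x, q] := w3.symm.collinear.mem_affineSpan_of_mem_of_ne
    (by simp) (by simp) (by simp) hxq
  have hp : p ∈ line[ℝ, x, q] := w2.symm.collinear.mem_affineSpan_of_mem_of_ne
    (by simp) (by simp) (by simp) hxq
  exact collinear_triple_of_mem_affineSpan_pair ha hp (right_mem_affineSpan_pair ℝ x q)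

/-- Case 2 of Lemma 3: when the crossing edge `pq` has exactly one endpoint
`q` inside the lens of `(a,b)`, the other endpoint `p` is at distance at
least `dist p q` from both `a` and `b`. -/
theorem one_endpoint_in_lens_far
    (a b p q : EuclideanSpace ℝ (Fin 2))
    (x : EuclideanSpace ℝ (Fin 2))
    (hx_ab : x ∈ openSegment ℝ a b)
    (hx_pq : x ∈ openSegment ℝ p q)
    (hcol_a : ¬ Collinear ℝ ({a, p, q} : Set (EuclideanSpace ℝ (Fin 2))))
    (hcol_b : ¬ Collinear ℝ ({b, p, q} : Set (EuclideanSpace ℝ (Fin 2))))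
    (ha_lens : ¬ (dist a p < dist p q ∧ dist a q < dist p q))
    (hb_lens : ¬ (dist b p < dist p q ∧ dist b q < dist p q))
    (hp_lens : ¬ (dist p a < dist a b ∧ dist p b < dist a b))
    (hq_lens : dist q a < dist a b ∧ dist q b < dist a b) :
    dist a p ≥ dist p q ∧ dist b p ≥ dist p q := by
  refine ⟨far_aux a b p q x hx_ab hx_pq hcol_a ha_lens hp_lens hq_lens.1,
    far_aux b a p q x ?_ hx_pq hcol_b hb_lens ?_ ?_⟩
  · rw [openSegment_symm]; exact hx_ab
  · rw [dist_comm b a]; exact fun h => hp_lens ⟨h.2, h.1⟩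
  · rw [dist_comm b a]; exact hq_lens.2
end

section
/- Let E be the Euclidean plane (EuclideanSpace ℝ (Fin 2)). Let a, c, p, q ∈ E and suppose some point x lies in the open segment between a and c and also in the open segment between p and q, that a, p, q are not collinear, and that dist p q ≤ dist a p. Then dist c q < dist a c. -/
/-- Final distance estimate in case 2 of Lemma 3: if the segment `ac`
crosses the segment `pq`, `a, p, q` are not collinear, and
`dist p q ≤ dist a p`, then `dist c q < dist a c`. -/
theorem crossing_distance_estimate
    (a c p q : EuclideanSpace ℝ (Fin 2))
    (x : EuclideanSpace ℝ (Fin 2))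
    (hx_ac : x ∈ openSegment ℝ a c)
    (hx_pq : x ∈ openSegment ℝ p q)
    (hcol : ¬ Collinear ℝ ({a, p, q} : Set (EuclideanSpace ℝ (Fin 2))))
    (hle : dist p q ≤ dist a p) :
    dist c q < dist a c := by
  have hs := openSegment_subset_segment ℝ p q hx_pq
  have h1 := dist_add_dist_of_mem_segment (openSegment_subset_segment ℝ a c hx_ac)
  have h2 := dist_add_dist_of_mem_segment hs
  have hpx : p ≠ x := by
    rintro rfl
    have hpq : p = q := left_mem_openSegment_iff.1 hx_pq
    subst hpq
    exact hcol (by simpa using collinear_pair ℝ a p)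
  have h3 : dist a p < dist a x + dist x p := by
    rw [dist_lt_dist_add_dist_iff]
    intro hw
    apply hcol
    apply collinear_insert_of_mem_affineSpan_pair
    have ha := hw.left_mem_affineSpan_of_right_ne hpx
    have hxl : x ∈ line[ℝ, p, q] := (mem_segment_iff_wbtw.1 hs).mem_affineSpan
    exact affineSpan_pair_le_of_mem_of_mem (left_mem_affineSpan_pair ℝ p q) hxl ha
  have h4 := dist_triangle c x q
  rw [dist_comm c x] at h4
  rw [dist_comm x p] at h3
  linarith
end

section
/- Let E be the Euclidean plane (EuclideanSpace ℝ (Fin 2)). Let a, b, c ∈ E be non-collinear, let x be a point of the open segment between a and b, and let p ∈ E be such that p and c are strictly on the same side of the affine line through a and b (AffineSubspace.SSameSide of the affine span of {a,b}) and p ∉ convexHull ℝ {a,b,c}. Then the segment from x to p meets the union of the segment from a to c and the segment from b to c; i.e., there exists y ∈ segment ℝ x p with y ∈ segment ℝ a c ∪ segment ℝ b c. -/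
lemma cross_aux {V : Type*} [AddCommGroup V] [Module ℝ V] (a b c : V) (u v α β γ : ℝ)
    (hu : 0 < u) (huv : u + v = 1) (hs : α + β + γ = 1) (hα : α < 0)
    (h : v * α ≤ u * β) (hγ : 0 < γ) :
    ∃ y ∈ segment ℝ (u • a + v • b) (α • a + β • b + γ • c), y ∈ segment ℝ b c := by
  have hd : 0 < u - α := by linarith
  have hd' : u - α ≠ 0 := hd.ne'
  refine ⟨((u * β - v * α) / (u - α)) • b + (u * γ / (u - α)) • c,
    ⟨-α / (u - α), u / (u - α), div_nonneg (by linarith) hd.le, by positivity, ?_, ?_⟩,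
    ⟨(u * β - v * α) / (u - α), u * γ / (u - α), div_nonneg (by linarith) hd.le,
      by positivity, ?_, rfl⟩⟩
  · field_simp
    ring
  · match_scalars <;> field_simp <;> ring
  · have : v = 1 - u := by linarith
    have : γ = 1 - α - β := by linarith
    subst_vars
    field_simp
    ring

/-- If `p` lies outside the triangle `abc` and strictly on the same side of
the line `(a,b)` as `c`, then any segment from an interior point `x` of the
side `ab` to `p` must cross the side `ac` or the side `bc`. -/
theorem segment_from_base_to_outside_crosses
    (a b c p x : EuclideanSpace ℝ (Fin 2))
    (hcol : ¬ Collinear ℝ ({a, b, c} : Set (EuclideanSpace ℝ (Fin 2))))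
    (hx : x ∈ openSegment ℝ a b)
    (hside : AffineSubspace.SSameSide
      (affineSpan ℝ ({a, b} : Set (EuclideanSpace ℝ (Fin 2)))) p c)
    (hp : p ∉ convexHull ℝ ({a, b, c} : Set (EuclideanSpace ℝ (Fin 2)))) :
    ∃ y ∈ segment ℝ x p, y ∈ segment ℝ a c ∪ segment ℝ b c := by
  obtain ⟨u, v, hu, hv, huv, rfl⟩ := hx
  obtain ⟨⟨p₁, hp₁, p₂, hp₂, hr⟩, hpn, hcn⟩ := hside
  obtain ⟨s, rfl⟩ := (mem_affineSpan_pair_iff_exists_lineMap_eq).1 hp₁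
  obtain ⟨t, rfl⟩ := (mem_affineSpan_pair_iff_exists_lineMap_eq).1 hp₂
  obtain ⟨k, hk, hpk⟩ : ∃ k : ℝ, 0 < k ∧ p - AffineMap.lineMap a b s
      = k • (c - AffineMap.lineMap a b t) := by
    rcases hr with h | h | ⟨r₁, r₂, h₁, h₂, h⟩
    · rw [vsub_eq_zero_iff_eq] at h
      exact absurd (h ▸ hp₁) hpn
    · rw [vsub_eq_zero_iff_eq] at h
      exact absurd (h ▸ hp₂) hcn
    · refine ⟨r₂ / r₁, by positivity, ?_⟩
      simp only [vsub_eq_sub] at h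
      rw [div_eq_inv_mul, mul_smul, ← h, smul_smul, inv_mul_cancel₀ h₁.ne', one_smul]
  obtain ⟨α, β, hsum, rfl⟩ : ∃ α β : ℝ, α + β + k = 1 ∧ p = α • a + β • b + k • c := by
    refine ⟨1 - s - k * (1 - t), s - k * t, by ring, ?_⟩
    rw [sub_eq_iff_eq_add.1 hpk, AffineMap.lineMap_apply_module, AffineMap.lineMap_apply_module]
    module
  have hneg : α < 0 ∨ β < 0 := by
    by_contra! hc
    apply hp
    have hcv := convex_convexHull ℝ ({a, b, c} : Set (EuclideanSpace ℝ (Fin 2)))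
    have hsub := subset_convexHull ℝ ({a, b, c} : Set (EuclideanSpace ℝ (Fin 2)))
    have := hcv.sum_mem (t := Finset.univ) (w := ![α, β, k]) (z := ![a, b, c])
      (by intro i _; fin_cases i <;> simp [hc.1, hc.2, hk.le])
      (by simp [Fin.sum_univ_three, hsum])
      (by intro i _; apply hsub; fin_cases i <;> simp)
    simpa [Fin.sum_univ_three] using this
  have hcase : (α < 0 ∧ v * α ≤ u * β) ∨ (β < 0 ∧ u * β ≤ v * α) := by
    rcases le_total (v * α) (u * β) with h | h
    · rcases hneg with h' | h'
      · exact Or.inl ⟨h', h⟩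
      · exact Or.inl ⟨by by_contra! h2; nlinarith [mul_nonneg hv.le h2, mul_neg_of_pos_of_neg hu h'], h⟩
    · rcases hneg with h' | h'
      · exact Or.inr ⟨by by_contra! h2; nlinarith [mul_nonneg hu.le h2, mul_neg_of_pos_of_neg hv h'], h⟩
      · exact Or.inr ⟨h', h⟩
  rcases hcase with ⟨h1, h2⟩ | ⟨h1, h2⟩
  · obtain ⟨y, hy, hy'⟩ := cross_aux a b c u v α β k hu huv hsum h1 h2 hk
    exact ⟨y, hy, Or.inr hy'⟩
  · obtain ⟨y, hy, hy'⟩ := cross_aux b a c v u β α k hv (by linarith) (by linarith) h1 h2 hk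
    rw [add_comm (v • b), add_comm (β • b)] at hy
    exact ⟨y, hy, Or.inl hy'⟩
end

section
/- Let E be the Euclidean plane (EuclideanSpace ℝ (Fin 2)). Let a, b ∈ E with a ≠ b, and let c, d, p, q ∈ E all lie in the open lens of (a,b), i.e. each of c, d, p, q is at distance < dist a b from both a and b. Suppose moreover that a ∉ lens(p,q) (i.e. dist a p ≥ dist p q or dist a q ≥ dist p q), that c and p lie weakly on the same side of the affine line through a and b, and that d and q lie weakly on the same side of that line. Then every edge of each of the six triangles {a,c,p}, {b,c,p}, {a,p,q}, {b,p,q}, {a,d,q}, {b,d,q} has length strictly less than dist a b; in particular dist p q < dist a b, dist c p < dist a b and dist d q < dist a b. -/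
lemma aux_real (S T U V L : ℝ) (hL : 0 < L) (h1 : S^2+T^2 < L^2) (h2 : (S-L)^2+T^2 < L^2)
    (h3 : U^2+V^2 < L^2) (h4 : (U-L)^2+V^2 < L^2) (hTV : 0 ≤ T*V) :
    (S-U)^2+(T-V)^2 < L^2 := by
  have hS0 : 0 < S := by nlinarith [sq_nonneg T, sq_nonneg S]
  have hU0 : 0 < U := by nlinarith [sq_nonneg V, sq_nonneg U]
  have hS1 : S < L := by nlinarith [sq_nonneg T, sq_nonneg (S-L)]
  have hU1 : U < L := by nlinarith [sq_nonneg V, sq_nonneg (U-L)]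
  rcases le_total (T^2) (V^2) with h | h
  · have e : T^2 ≤ T*V := by
      have := sq_le_sq.1 h
      rw [← abs_of_nonneg hTV, abs_mul, ← sq_abs, sq]
      exact mul_le_mul_of_nonneg_left this (abs_nonneg _)
    rcases le_total S U with k | k
    · have : (S-U)^2 ≤ U^2 := by nlinarith
      nlinarith [sq_nonneg T]
    · have : (S-U)^2 ≤ (U-L)^2 := by nlinarith
      nlinarith [sq_nonneg T]
  · have e : V^2 ≤ T*V := by
      have := sq_le_sq.1 h
      rw [← abs_of_nonneg hTV, abs_mul, ← sq_abs, sq]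
      exact mul_le_mul_of_nonneg_right this (abs_nonneg _)
    rcases le_total S U with k | k
    · have : (S-U)^2 ≤ (S-L)^2 := by nlinarith
      nlinarith [sq_nonneg V]
    · have : (S-U)^2 ≤ S^2 := by nlinarith
      nlinarith [sq_nonneg V]

lemma aux_side (a b c p : EuclideanSpace ℝ (Fin 2))
    (h : AffineSubspace.WSameSide
      (affineSpan ℝ ({a, b} : Set (EuclideanSpace ℝ (Fin 2)))) c p) :
    0 ≤ ((b 0 - a 0) * (c 1 - a 1) - (b 1 - a 1) * (c 0 - a 0)) *
      ((b 0 - a 0) * (p 1 - a 1) - (b 1 - a 1) * (p 0 - a 0)) := by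
  obtain ⟨x, hx, y, hy, hr⟩ := h
  obtain ⟨r, rfl⟩ := (_root_.mem_affineSpan_pair_iff_exists_lineMap_eq).1 hx
  obtain ⟨s, rfl⟩ := (_root_.mem_affineSpan_pair_iff_exists_lineMap_eq).1 hy
  have key : ∀ (z : EuclideanSpace ℝ (Fin 2)) (r : ℝ),
      (b 0 - a 0) * (z 1 - a 1) - (b 1 - a 1) * (z 0 - a 0) =
      (b 0 - a 0) * ((z -ᵥ AffineMap.lineMap a b r : EuclideanSpace ℝ (Fin 2)) 1)
       - (b 1 - a 1) * ((z -ᵥ AffineMap.lineMap a b r : EuclideanSpace ℝ (Fin 2)) 0) := by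
    intro z r
    simp [AffineMap.lineMap_apply]
    ring
  rw [key c r, key p s]
  generalize (c -ᵥ AffineMap.lineMap a b r : EuclideanSpace ℝ (Fin 2)) = v at *
  generalize (p -ᵥ AffineMap.lineMap a b s : EuclideanSpace ℝ (Fin 2)) = w at *
  rcases hr with h | h | ⟨m, n, hm, hn, h⟩
  · simp [h]
  · simp [h]
  · have e0 : m * v 0 = n * w 0 := by simpa using congrArg (fun z => z 0) h
    have e1 : m * v 1 = n * w 1 := by simpa using congrArg (fun z => z 1) h
    have f0 : v 0 = n / m * w 0 := by field_simp; linarith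
    have f1 : v 1 = n / m * w 1 := by field_simp; linarith
    rw [f0, f1]
    have : 0 ≤ n / m * ((b 0 - a 0) * w 1 - (b 1 - a 1) * w 0)^2 := by positivity
    nlinarith

lemma aux_dist (x y a b : EuclideanSpace ℝ (Fin 2)) :
    dist x y < dist a b ↔
      (x 0 - y 0)^2 + (x 1 - y 1)^2 < (b 0 - a 0)^2 + (b 1 - a 1)^2 := by
  rw [dist_comm a b, EuclideanSpace.dist_eq, EuclideanSpace.dist_eq,
    Real.sqrt_lt_sqrt_iff (by positivity)]
  simp [Fin.sum_univ_two, Real.dist_eq, sq_abs]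

lemma aux_main (a b c p : EuclideanSpace ℝ (Fin 2))
    (hca : dist c a < dist a b) (hcb : dist c b < dist a b)
    (hpa : dist p a < dist a b) (hpb : dist p b < dist a b)
    (h : AffineSubspace.WSameSide
      (affineSpan ℝ ({a, b} : Set (EuclideanSpace ℝ (Fin 2)))) c p) :
    dist c p < dist a b := by
  have hs := aux_side a b c p h
  rw [aux_dist] at *
  have hL : 0 < (b 0 - a 0)^2 + (b 1 - a 1)^2 := lt_of_le_of_lt (by positivity) hca
  have := aux_real ((b 0 - a 0) * (c 0 - a 0) + (b 1 - a 1) * (c 1 - a 1)) _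
    ((b 0 - a 0) * (p 0 - a 0) + (b 1 - a 1) * (p 1 - a 1)) _ _ hL
    (by have := mul_lt_mul_of_pos_left hca hL; linarith)
    (by have := mul_lt_mul_of_pos_left hcb hL; linarith)
    (by have := mul_lt_mul_of_pos_left hpa hL; linarith)
    (by have := mul_lt_mul_of_pos_left hpb hL; linarith) hs
  refine lt_of_mul_lt_mul_left ?_ hL.le
  linarith

/-- Conclusion of case 1 of Lemma 3: all edges of the six triangles
`acp, bcp, apq, bpq, adq, bdq` are strictly shorter than `dist a b`. -/
theorem case1_all_edges_short
    (a b c d p q : EuclideanSpace ℝ (Fin 2)) (hab : a ≠ b)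
    (hca : dist c a < dist a b) (hcb : dist c b < dist a b)
    (hda : dist d a < dist a b) (hdb : dist d b < dist a b)
    (hpa : dist p a < dist a b) (hpb : dist p b < dist a b)
    (hqa : dist q a < dist a b) (hqb : dist q b < dist a b)
    (ha_lens : dist a p ≥ dist p q ∨ dist a q ≥ dist p q)
    (hcp : AffineSubspace.WSameSide
      (affineSpan ℝ ({a, b} : Set (EuclideanSpace ℝ (Fin 2)))) c p)
    (hdq : AffineSubspace.WSameSide
      (affineSpan ℝ ({a, b} : Set (EuclideanSpace ℝ (Fin 2)))) d q) :
    dist a c < dist a b ∧ dist a p < dist a b ∧ dist c p < dist a b ∧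
    dist b c < dist a b ∧ dist b p < dist a b ∧
    dist a q < dist a b ∧ dist p q < dist a b ∧
    dist b q < dist a b ∧
    dist a d < dist a b ∧ dist d q < dist a b ∧ dist b d < dist a b := by
  have h1 := aux_main a b c p hca hcb hpa hpb hcp
  have h2 := aux_main a b d q hda hdb hqa hqb hdq
  rw [dist_comm c a] at hca
  rw [dist_comm c b] at hcb
  rw [dist_comm d a] at hda
  rw [dist_comm d b] at hdb
  rw [dist_comm p a] at hpa
  rw [dist_comm p b] at hpb
  rw [dist_comm q a] at hqa
  rw [dist_comm q b] at hqb
  have h3 : dist p q < dist a b := by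
    rcases ha_lens with h | h
    · exact lt_of_le_of_lt h hpa
    · exact lt_of_le_of_lt h hqa
  exact ⟨hca, hpa, h1, hcb, hpb, hqa, h3, hqb, hda, h2, hdb⟩
end
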